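/- arXiv:2011.05170 — 3 statements merged into one kernel-verified Lean document; each statement's English description precedes it below -/
import Mathlib

section
/- Fix s ∈ ℕ and let 𝒯_s(φ) := Σ_{d ∈ ℕ^{n+1}_s} φ_{2d}. If for each r ≥ max(s, max_j d_j), φ^r is an optimal solution of the problem inf { 𝒯_s(φ) : φ feasible at order r }, then lim_{r→∞} 𝒯_s(φ^r) = Σ_{d ∈ ℕ^{n+1}_s} μ_{2d}, and lim_{r→∞} φ^r_d = μ_d for every d ∈ ℕ^{n+1}_{2s}. -/
open MeasureTheory Set

noncomputable section

/-- The finite set `ℕ^{n+1}_r` of multi-indices `d ∈ ℕ^n × ℕ` with `|d| ≤ r`. -/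
def idx (n r : ℕ) : Finset ((Fin n → ℕ) × ℕ) :=
  Finset.filter (fun d => (∑ i, d.1 i) + d.2 ≤ r)
    ((Fintype.piFinset fun _ : Fin n => Finset.range (r + 1)) ×ˢ Finset.range (r + 1))

/-- Multi-indices `e ∈ ℕ^n` with `|e| ≤ r`. -/
def xIdx (n r : ℕ) : Finset (Fin n → ℕ) :=
  Finset.filter (fun e => ∑ i, e i ≤ r) (Fintype.piFinset fun _ : Fin n => Finset.range (r + 1))

/-- Evaluation of a polynomial in `x` of degree `≤ r` given by its coefficients `c`. -/
def polyEval (n r : ℕ) (c : (Fin n → ℕ) → ℝ) (x : Fin n → ℝ) : ℝ :=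
  ∑ e ∈ xIdx n r, c e * ∏ i, x i ^ e i

/-- The moment matrix `M_r(φ)`, with rows and columns indexed by `ℕ^{n+1}_r`. -/
def momMat (n r : ℕ) (φ : ((Fin n → ℕ) × ℕ) → ℝ) : Matrix (idx n r) (idx n r) ℝ :=
  fun a b => φ (fun i => a.1.1 i + b.1.1 i, a.1.2 + b.1.2)

/-- The localizing matrix `M_{r−t}(g φ)` of a polynomial `g` in `x` with coefficients `c`
and degree `≤ 2t`. -/
def locMatX (n : ℕ) (c : (Fin n → ℕ) → ℝ) (t r : ℕ) (φ : ((Fin n → ℕ) × ℕ) → ℝ) :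
    Matrix (idx n (r - t)) (idx n (r - t)) ℝ :=
  fun a b => ∑ e ∈ xIdx n (2 * t),
    c e * φ (fun i => e i + a.1.1 i + b.1.1 i, a.1.2 + b.1.2)

/-- The localizing matrix `M_{r−1}(g_{m+1} φ)` of the polynomial `g_{m+1}(x,y) = y(γ−y)`. -/
def locMatY (n : ℕ) (γ : ℝ) (r : ℕ) (φ : ((Fin n → ℕ) × ℕ) → ℝ) :
    Matrix (idx n (r - 1)) (idx n (r - 1)) ℝ :=
  fun a b => γ * φ (fun i => a.1.1 i + b.1.1 i, a.1.2 + b.1.2 + 1)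
    - φ (fun i => a.1.1 i + b.1.1 i, a.1.2 + b.1.2 + 2)

/-- Feasibility of a pseudo-moment sequence `φ` at relaxation order `r`:
`M_r(φ) ⪰ 0`, `M_{r−d_j}(g_j φ) ⪰ 0` for `j = 1,…,m+1`, and `φ_d = μ_d` for all
`d ∈ D = {d : d_y ≤ 1}` with `|d| ≤ 2r`. -/
def Feasible (n m : ℕ) (γ : ℝ) (g : Fin m → (Fin n → ℕ) → ℝ) (t : Fin m → ℕ)
    (μmom : ((Fin n → ℕ) × ℕ) → ℝ) (r : ℕ) (φ : ((Fin n → ℕ) × ℕ) → ℝ) : Prop :=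
  (momMat n r φ).PosSemidef ∧
  (∀ j, (locMatX n (g j) (t j) r φ).PosSemidef) ∧
  (locMatY n γ r φ).PosSemidef ∧
  ∀ d : (Fin n → ℕ) × ℕ, d.2 ≤ 1 → (∑ i, d.1 i) + d.2 ≤ 2 * r → φ d = μmom d

/-!
Positivity of the moment matrix and of the localizing matrix of `y (γ - y)` bounds every coordinate
of `φ^r` by moments that are fixed by the constraints, so it suffices to show that every
coordinatewise ultrafilter limit `ψ` is the true moment sequence. Let `L` and `I` be the linear
functionals on polynomials given by `ψ` and by the true moments. `L` is nonnegative on squares and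
agrees with `I` on polynomials of degree at most one in `y`.

There are polynomials `p_k` in `x`, uniformly bounded on `X`, that converge to `f` almost
everywhere; under `I` they converge to `y`. The convex function `y ^ (2 j)` exceeds its tangent at
`p_k` by a sum of squares, so `I` is at most `L` on even monomials. Since `μ` itself is feasible,
optimality of `φ^r` turns these inequalities into equalities for all the monomials in the
objective, `y ^ 2` among them when `s ≥ 1`. Hence `L ((y - p_k) ^ 2) → 0`, and the Cauchy–Schwarz
inequality for `L` lets one replace the powers of `y` by `p_k` one factor at a time.
-/

section PositiveFunctional

open Filter Topology

theorem isSumSq_sq_sub_sq_mul_pow_sub_pow {R : Type*} [CommRing R] (y p : R) (k : ℕ) :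
    IsSumSq ((y ^ 2 - p ^ 2) * (y ^ (2 * k) - p ^ (2 * k))) := by
  induction k with
  | zero => simp
  | succ k ih =>
    have decomposition : (y ^ 2 - p ^ 2) * (y ^ (2 * (k + 1)) - p ^ (2 * (k + 1)))
        = p * p * ((y ^ 2 - p ^ 2) * (y ^ (2 * k) - p ^ (2 * k)))
          + y ^ k * (y ^ 2 - p ^ 2) * (y ^ k * (y ^ 2 - p ^ 2)) := by ring
    rw [decomposition]
    exact ((IsSumSq.mul_self p).mul ih).add (.mul_self _)

/-- The gap between the convex function `y ^ (2 * k + 2)` and its tangent at `p`. -/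
theorem isSumSq_even_pow_sub_tangent {R : Type*} [CommRing R] (y p : R) (k : ℕ) :
    IsSumSq (y ^ (2 * k + 2) - (2 * k + 2) * (y * p ^ (2 * k + 1))
      + (2 * k + 1) * p ^ (2 * k + 2)) := by
  induction k with
  | zero =>
    have square : y ^ (2 * 0 + 2) - (2 * (0 : ℕ) + 2) * (y * p ^ (2 * 0 + 1))
        + (2 * (0 : ℕ) + 1) * p ^ (2 * 0 + 2) = (y - p) * (y - p) := by
      push_cast
      ring
    rw [square]
    exact .mul_self _
  | succ k ih =>
    have decomposition : y ^ (2 * (k + 1) + 2) - (2 * (k + 1 : ℕ) + 2) * (y * p ^ (2 * (k + 1) + 1))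
          + (2 * (k + 1 : ℕ) + 1) * p ^ (2 * (k + 1) + 2)
        = p * p * (y ^ (2 * k + 2) - (2 * k + 2) * (y * p ^ (2 * k + 1))
            + (2 * k + 1) * p ^ (2 * k + 2))
          + (y ^ 2 - p ^ 2) * (y ^ (2 * (k + 1)) - p ^ (2 * (k + 1)))
          + p ^ (k + 1) * (y - p) * (p ^ (k + 1) * (y - p)) := by
      push_cast
      ring
    rw [decomposition]
    exact (((IsSumSq.mul_self p).mul ih).add
      (isSumSq_sq_sub_sq_mul_pow_sub_pow y p (k + 1))).add (.mul_self _)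

variable {A : Type*} [CommRing A] [Algebra ℝ A]

theorem apply_nonneg_of_isSumSq {L : A →ₗ[ℝ] ℝ} (hL : ∀ h, 0 ≤ L (h ^ 2)) {a : A}
    (ha : IsSumSq a) : 0 ≤ L a := by
  induction ha using IsSumSq.rec' with
  | zero => simp
  | sq_add hx _ ih =>
    obtain ⟨h, rfl⟩ := hx
    rw [map_add, ← sq]
    exact add_nonneg (hL h) ih

theorem sq_apply_mul_le {L : A →ₗ[ℝ] ℝ} (hL : ∀ h, 0 ≤ L (h ^ 2)) (u v : A) :
    L (u * v) ^ 2 ≤ L (u ^ 2) * L (v ^ 2) := by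
  have h := LinearMap.BilinForm.apply_sq_le_of_symm ((LinearMap.mul ℝ A).compr₂ L)
    (fun h => by simpa [sq] using hL h) ⟨fun a b => by simp [mul_comm a b]⟩ u v
  simpa [sq] using h

theorem abs_apply_le_of_sq_nonneg {L : A →ₗ[ℝ] ℝ} {u : A} (hsub : 0 ≤ L ((1 - u) ^ 2))
    (hadd : 0 ≤ L ((1 + u) ^ 2)) : |L u| ≤ (L 1 + L (u ^ 2)) / 2 := by
  have expand_sub : (1 - u) ^ 2 = 1 - (2 : ℝ) • u + u ^ 2 := by rw [ofNat_smul_eq_nsmul]; ring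
  have expand_add : (1 + u) ^ 2 = 1 + (2 : ℝ) • u + u ^ 2 := by rw [ofNat_smul_eq_nsmul]; ring
  simp only [expand_sub, expand_add, map_add, map_sub, map_smul, smul_eq_mul] at hsub hadd
  rw [abs_le]
  constructor <;> linarith

theorem eventually_apply_mul_pow_sq_le {ι : Type*} {l : Filter ι} {L : ι → A →ₗ[ℝ] ℝ}
    (hsq : ∀ h, ∀ᶠ r in l, 0 ≤ L r (h ^ 2)) {y : A} {γ : ℝ}
    (hbox : ∀ h, ∀ᶠ r in l, 0 ≤ L r ((γ • y - y ^ 2) * h ^ 2)) (h : A) (k : ℕ) :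
    ∀ᶠ r in l, L r ((h * y ^ k) ^ 2) ≤ (γ ^ 2) ^ k * L r (h ^ 2) := by
  induction k generalizing h with
  | zero => simp
  | succ k ih =>
    filter_upwards [ih (h * y), hsq (γ • h - y * h), hbox h] with r hle hnonneg hbox_nonneg
    have decomposition : γ ^ 2 • h ^ 2 - (h * y) ^ 2
        = (γ • h - y * h) ^ 2 + (2 : ℝ) • ((γ • y - y ^ 2) * h ^ 2) := by
      simp only [Algebra.smul_def, map_pow, map_ofNat]
      ring
    have one_factor_le : L r ((h * y) ^ 2) ≤ γ ^ 2 * L r (h ^ 2) := by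
      have := congrArg (L r) decomposition
      simp only [map_sub, map_add, map_smul, smul_eq_mul] at this
      linarith
    calc L r ((h * y ^ (k + 1)) ^ 2) = L r ((h * y * y ^ k) ^ 2) := by ring_nf
      _ ≤ (γ ^ 2) ^ k * L r ((h * y) ^ 2) := hle
      _ ≤ (γ ^ 2) ^ k * (γ ^ 2 * L r (h ^ 2)) := by gcongr
      _ = (γ ^ 2) ^ (k + 1) * L r (h ^ 2) := by ring

/-- The element `y` is a limit of elements of the subalgebra `S` in the eyes of the functional `I`.
If `I` is integration against a measure on the graph of `f`, `S` the polynomials in `x` and `y` the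
last coordinate, this holds as soon as `f` is a bounded limit of polynomials. -/
def IsMomentLimit (I : A →ₗ[ℝ] ℝ) (S : Subalgebra ℝ A) (y : A) : Prop :=
  ∃ p : ℕ → A, (∀ k, p k ∈ S) ∧
    ∀ w j, Tendsto (fun k => I (w * p k ^ j)) atTop (𝓝 (I (w * y ^ j)))

variable {L I : A →ₗ[ℝ] ℝ} {S : Subalgebra ℝ A} {y : A}

/-- Jensen's inequality for `z ↦ z ^ (2 * k)`, obtained by integrating tangents at the
approximants of `y`. -/
theorem IsMomentLimit.apply_sq_mul_even_pow_le (hy : IsMomentLimit I S y)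
    (hL : ∀ h, 0 ≤ L (h ^ 2)) (hS : ∀ w ∈ S, L w = I w) (hyS : ∀ w ∈ S, L (y * w) = I (y * w))
    {w : A} (hw : w ∈ S) (k : ℕ) : I (w ^ 2 * y ^ (2 * k)) ≤ L (w ^ 2 * y ^ (2 * k)) := by
  have hw2 : w ^ 2 ∈ S := pow_mem hw 2
  obtain _ | k := k
  · simpa using (hS _ hw2).ge
  obtain ⟨p, hpS, hp⟩ := hy
  have tangent_le (i : ℕ) : (2 * k + 2) * I (w ^ 2 * y * p i ^ (2 * k + 1))
      - (2 * k + 1) * I (w ^ 2 * p i ^ (2 * k + 2)) ≤ L (w ^ 2 * y ^ (2 * k + 2)) := by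
    have gap_nonneg := apply_nonneg_of_isSumSq hL
      ((IsSumSq.mul_self w).mul (isSumSq_even_pow_sub_tangent y (p i) k))
    have expand : w * w * (y ^ (2 * k + 2) - (2 * k + 2) * (y * p i ^ (2 * k + 1))
          + (2 * k + 1) * p i ^ (2 * k + 2))
        = w ^ 2 * y ^ (2 * k + 2) - (2 * k + 2 : ℝ) • (y * (w ^ 2 * p i ^ (2 * k + 1)))
          + (2 * k + 1 : ℝ) • (w ^ 2 * p i ^ (2 * k + 2)) := by
      simp only [Algebra.smul_def, map_add, map_mul, map_ofNat, map_natCast, map_one]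
      ring
    rw [expand, map_add, map_sub, map_smul, map_smul, smul_eq_mul, smul_eq_mul,
      hyS _ (mul_mem hw2 (pow_mem (hpS i) _)), hS _ (mul_mem hw2 (pow_mem (hpS i) _))] at gap_nonneg
    rw [mul_right_comm (w ^ 2), mul_comm _ y]
    linarith
  have tangent_lim := ((hp (w ^ 2 * y) (2 * k + 1)).const_mul (2 * k + 2 : ℝ)).sub
    ((hp (w ^ 2) (2 * k + 2)).const_mul (2 * k + 1 : ℝ))
  have limit_eq : (2 * k + 2 : ℝ) * I (w ^ 2 * y * y ^ (2 * k + 1))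
      - (2 * k + 1) * I (w ^ 2 * y ^ (2 * k + 2)) = I (w ^ 2 * y ^ (2 * (k + 1))) := by
    rw [mul_assoc (w ^ 2), ← pow_succ']
    ring_nf
  rw [limit_eq] at tangent_lim
  exact le_of_tendsto' tangent_lim tangent_le

theorem IsMomentLimit.apply_mul_pow_eq (hy : IsMomentLimit I S y)
    (hL : ∀ h, 0 ≤ L (h ^ 2)) (hS : ∀ w ∈ S, L w = I w) (hyS : ∀ w ∈ S, L (y * w) = I (y * w))
    (hy2 : L (y ^ 2) = I (y ^ 2)) {w : A} (hw : w ∈ S) (k : ℕ) :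
    L (w * y ^ k) = I (w * y ^ k) := by
  obtain ⟨p, hpS, hp⟩ := hy
  have dist_sq_eq (i : ℕ) :
      L ((y - p i) ^ 2) = I (y ^ 2) - 2 * I (y * p i ^ 1) + I (1 * p i ^ 2) := by
    have expand : (y - p i) ^ 2 = y ^ 2 - (2 : ℝ) • (y * p i) + p i ^ 2 := by
      rw [ofNat_smul_eq_nsmul]
      ring
    rw [expand, map_add, map_sub, map_smul, smul_eq_mul, hy2, hyS _ (hpS i),
      hS _ (pow_mem (hpS i) 2), pow_one, one_mul]
  have dist_sq_lim : Tendsto (fun i => L ((y - p i) ^ 2)) atTop (𝓝 0) := by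
    simp only [dist_sq_eq]
    convert ((hp y 1).const_mul 2).const_sub (I (y ^ 2)) |>.add (hp 1 2) using 2
    ring_nf
  have error_lim (u : A) : Tendsto (fun i => L (u * (y - p i))) atTop (𝓝 0) := by
    have bound_lim := (dist_sq_lim.const_mul (L (u ^ 2))).sqrt
    rw [mul_zero, Real.sqrt_zero] at bound_lim
    exact squeeze_zero_norm (fun i => Real.abs_le_sqrt (sq_apply_mul_le hL u (y - p i))) bound_lim
  induction k generalizing w with
  | zero => simpa using hS w hw
  | succ k ih =>
    have decomposition (i : ℕ) :
        L (w * y ^ (k + 1)) = L (w * y ^ k * (y - p i)) + I (w * y ^ k * p i ^ 1) := by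
      rw [pow_one, mul_right_comm w (y ^ k) (p i), ← ih (mul_mem hw (hpS i)), ← map_add]
      ring_nf
    have lim := (error_lim (w * y ^ k)).add (hp (w * y ^ k) 1)
    simp only [← decomposition] at lim
    rw [tendsto_nhds_unique tendsto_const_nhds lim]
    ring_nf

end PositiveFunctional

section Riesz

open Filter Topology
open scoped AddMonoidAlgebra
open AddMonoidAlgebra (single)

variable {M : Type*}

/-- The Riesz functional of a pseudo-moment sequence `φ`: it linearizes a polynomial by replacing
the monomial of exponent `d` with `φ d`. -/
def riesz (φ : M → ℝ) : ℝ[M] →ₗ[ℝ] ℝ :=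
  Finsupp.linearCombination ℝ φ ∘ₗ (AddMonoidAlgebra.coeffLinearEquiv ℝ).toLinearMap

@[simp]
theorem riesz_single (φ : M → ℝ) (d : M) (c : ℝ) : riesz φ (single d c) = c * φ d := by
  simp [riesz]

theorem tendsto_riesz {ι : Type*} {l : Filter ι} {φ : ι → M → ℝ} {ψ : M → ℝ}
    (hφ : ∀ d, Tendsto (φ · d) l (𝓝 (ψ d))) (h : ℝ[M]) :
    Tendsto (fun r => riesz (φ r) h) l (𝓝 (riesz ψ h)) := by
  induction h using AddMonoidAlgebra.induction_linear with
  | zero => simpa only [map_zero] using tendsto_const_nhds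
  | add u v hu hv => simpa only [map_add] using hu.add hv
  | single d c => simpa only [riesz_single] using (hφ d).const_mul c

variable [AddCommMonoid M]

/-- The localizing matrix of the polynomial `q` for the pseudo-moment sequence `φ`, with rows and
columns indexed by the monomials in `I`; the moment matrix is the case `q = 1`. -/
def localizingMatrix (I : Finset M) (φ : M → ℝ) (q : ℝ[M]) : Matrix I I ℝ :=
  fun a b => riesz φ (q * single (a + b : M) 1)

theorem dotProduct_localizingMatrix_mulVec (I : Finset M) (φ : M → ℝ) (q : ℝ[M]) (v : I → ℝ) :
    v ⬝ᵥ (localizingMatrix I φ q).mulVec v = riesz φ (q * (∑ a : I, single (a : M) (v a)) ^ 2) := by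
  have expand : q * (∑ a : I, single (a : M) (v a)) ^ 2
      = ∑ a : I, ∑ b : I, (v a * v b) • (q * single (a + b : M) 1) := by
    rw [sq, Finset.sum_mul_sum, Finset.mul_sum]
    refine Finset.sum_congr rfl fun a _ => ?_
    rw [Finset.mul_sum]
    refine Finset.sum_congr rfl fun b _ => ?_
    rw [AddMonoidAlgebra.single_mul_single, ← mul_smul_comm, AddMonoidAlgebra.smul_single,
      smul_eq_mul, mul_one]
  simp only [expand, map_sum, map_smul, smul_eq_mul, dotProduct, Matrix.mulVec, Finset.mul_sum,
    localizingMatrix]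
  exact Finset.sum_congr rfl fun a _ => Finset.sum_congr rfl fun b _ => by ring

theorem posSemidef_localizingMatrix {φ : M → ℝ} {q : ℝ[M]} (I : Finset M)
    (hnonneg : ∀ h, 0 ≤ riesz φ (q * h ^ 2)) : (localizingMatrix I φ q).PosSemidef := by
  refine Matrix.posSemidef_iff_dotProduct_mulVec.2
    ⟨Matrix.IsHermitian.ext fun a b => ?_, fun v => ?_⟩
  · simp only [localizingMatrix, star_trivial, add_comm]
  · rw [star_trivial, dotProduct_localizingMatrix_mulVec]
    exact hnonneg _

theorem riesz_mul_sq_nonneg_of_posSemidef {I : Finset M} {φ : M → ℝ} {q h : ℝ[M]}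
    (hpsd : (localizingMatrix I φ q).PosSemidef) (hsupp : h.coeff.support ⊆ I) :
    0 ≤ riesz φ (q * h ^ 2) := by
  have expand : ∑ a : I, single (a : M) (h.coeff a) = h := by
    rw [Finset.sum_coe_sort I fun a => single a (h.coeff a),
      ← Finsupp.sum_of_support_subset _ hsupp single fun _ _ => AddMonoidAlgebra.single_zero _,
      AddMonoidAlgebra.sum_coeff_single]
  have hnonneg := (Matrix.posSemidef_iff_dotProduct_mulVec.1 hpsd).2 fun a => h.coeff a
  rwa [star_trivial, dotProduct_localizingMatrix_mulVec, expand] at hnonneg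

theorem eventually_riesz_mul_sq_nonneg {ι : Type*} {l : Filter ι} {I : ι → Finset M}
    {φ : ι → M → ℝ} {q : ℝ[M]} (hI : ∀ d, ∀ᶠ r in l, d ∈ I r)
    (hpsd : ∀ᶠ r in l, (localizingMatrix (I r) (φ r) q).PosSemidef) (h : ℝ[M]) :
    ∀ᶠ r in l, 0 ≤ riesz (φ r) (q * h ^ 2) := by
  have hsupp : ∀ᶠ r in l, ∀ d ∈ h.coeff.support, d ∈ I r :=
    (Finset.eventually_all _).2 fun d _ => hI d
  filter_upwards [hpsd, hsupp] with r hr hsub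
  exact riesz_mul_sq_nonneg_of_posSemidef hr hsub

end Riesz

section Approximation

open Filter Topology

variable {E : Type*} [TopologicalSpace E] [NormalSpace E] [MeasurableSpace E] [BorelSpace E]
  {μ : Measure E} [μ.WeaklyRegular] {f : E → ℝ}

theorem exists_seq_continuousMap_tendsto_ae (hf : Integrable f μ) :
    ∃ u : ℕ → C(E, ℝ), ∀ᵐ x ∂μ, Tendsto (fun k => u k x) atTop (𝓝 (f x)) := by
  have hmem : MemLp f 1 μ := memLp_one_iff_integrable.2 hf
  choose v hv hv_mem using fun k : ℕ => hmem.exists_boundedContinuous_eLpNorm_sub_le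
    ENNReal.one_ne_top (ε := (k + 1 : ENNReal)⁻¹) (by simp)
  have eLpNorm_lim : Tendsto (fun k => eLpNorm (⇑(v k) - f) 1 μ) atTop (𝓝 0) := by
    refine tendsto_of_tendsto_of_tendsto_of_le_of_le tendsto_const_nhds
      ((tendsto_add_atTop_iff_nat 1).2 ENNReal.tendsto_inv_nat_nhds_zero) (fun _ => zero_le) ?_
    intro k
    simpa only [eLpNorm_sub_comm, Nat.cast_add, Nat.cast_one] using hv k
  obtain ⟨ns, -, hns⟩ := (tendstoInMeasure_of_tendsto_eLpNorm one_ne_zero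
    (fun k => (hv_mem k).1) hf.1 eLpNorm_lim).exists_seq_tendsto_ae
  exact ⟨fun k => v (ns k), hns⟩

theorem exists_seq_continuousMap_abs_le_tendsto_ae (hf : Integrable f μ) {C : ℝ} (hC : 0 ≤ C)
    (hfC : ∀ᵐ x ∂μ, |f x| ≤ C) :
    ∃ u : ℕ → C(E, ℝ), (∀ k x, |u k x| ≤ C) ∧
      ∀ᵐ x ∂μ, Tendsto (fun k => u k x) atTop (𝓝 (f x)) := by
  obtain ⟨v, hv⟩ := exists_seq_continuousMap_tendsto_ae hf
  let clip : C(ℝ, ℝ) := ⟨fun z => max (-C) (min C z), by fun_prop⟩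
  refine ⟨fun k => clip.comp (v k), fun k x => abs_le.2 ⟨le_max_left _ _, ?_⟩, ?_⟩
  · exact max_le (neg_le_self hC) (min_le_left _ _)
  · filter_upwards [hv, hfC] with x hlim hx
    have clip_eq : clip (f x) = f x := by
      simp only [clip, ContinuousMap.coe_mk, min_eq_right (abs_le.1 hx).2,
        max_eq_right (abs_le.1 hx).1]
    rw [← clip_eq]
    exact (clip.continuous.tendsto _).comp hlim

theorem exists_seq_mem_subalgebra_tendsto_ae {S : Subalgebra ℝ C(E, ℝ)} (hS : S.SeparatesPoints)
    {K : Set E} (hK : IsCompact K) (hμK : ∀ᵐ x ∂μ, x ∈ K) (hf : Integrable f μ) {C : ℝ}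
    (hC : 0 ≤ C) (hfC : ∀ᵐ x ∂μ, |f x| ≤ C) :
    ∃ p : ℕ → C(E, ℝ), (∀ k, p k ∈ S) ∧ (∀ k, ∀ x ∈ K, |p k x| ≤ C + 1) ∧
      ∀ᵐ x ∂μ, Tendsto (fun k => p k x) atTop (𝓝 (f x)) := by
  obtain ⟨u, hu_le, hu_lim⟩ := exists_seq_continuousMap_abs_le_tendsto_ae hf hC hfC
  choose p hpS hp using fun k : ℕ =>
    ContinuousMap.exists_mem_subalgebra_near_continuous_of_isCompact_of_separatesPoints hS (u k) hK
      (Nat.one_div_pos_of_nat (α := ℝ) (n := k))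
  refine ⟨p, hpS, fun k x hx => ?_, ?_⟩
  · calc |p k x| = |u k x + (p k x - u k x)| := by rw [add_sub_cancel]
      _ ≤ |u k x| + |p k x - u k x| := abs_add_le _ _
      _ ≤ C + 1 := add_le_add (hu_le k x) ((hp k x hx).le.trans
        (by simpa using Nat.one_div_le_one_div (α := ℝ) k.zero_le))
  · filter_upwards [hu_lim, hμK] with x hlim hx
    refine hlim.congr_dist (squeeze_zero (fun _ => dist_nonneg) (fun k => ?_)
      tendsto_one_div_add_atTop_nhds_zero_nat)
    rw [dist_comm, Real.dist_eq]
    exact (hp k x hx).le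

end Approximation

section CoordinatewiseCompactness

open Filter Topology

theorem tendsto_of_forall_ultrafilter_limit_eq {ι κ Y : Type*} [TopologicalSpace Y] {l : Filter ι}
    {a : ι → κ → Y} (ha : ∀ k, ∃ K, IsCompact K ∧ ∀ᶠ r in l, a r k ∈ K) {k : κ} {b : Y}
    (hb : ∀ (U : Ultrafilter ι) (c : κ → Y), ↑U ≤ l → (∀ k, Tendsto (a · k) U (𝓝 (c k))) →
      c k = b) :
    Tendsto (a · k) l (𝓝 b) := by
  rw [tendsto_iff_ultrafilter]
  intro U hU
  have limit_exists (k : κ) : ∃ c, Tendsto (a · k) U (𝓝 c) := by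
    obtain ⟨K, hK, hmem⟩ := ha k
    obtain ⟨c, -, hc⟩ := hK.ultrafilter_le_nhds' (U.map (a · k)) (hU hmem)
    exact ⟨c, hc⟩
  choose c hc using limit_exists
  exact hb U c hU hc ▸ hc k

end CoordinatewiseCompactness

section GraphPolynomials

open Filter
open scoped AddMonoidAlgebra
open AddMonoidAlgebra (single)

/-- The polynomials in `x` alone, inside the algebra of polynomials in `(x, y)`. -/
def xPolys (σ : Type*) : Subalgebra ℝ ℝ[(σ → ℕ) × ℕ] :=
  (AddMonoidAlgebra.mapDomainAlgHom ℝ ℝ (AddMonoidHom.inl (σ → ℕ) ℕ)).range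

/-- The polynomial `y`. -/
abbrev yVar (σ : Type*) : ℝ[(σ → ℕ) × ℕ] := single (0, 1) 1

section Monomials

variable {σ : Type*}

theorem single_mem_xPolys (a : σ → ℕ) (c : ℝ) : single (a, 0) c ∈ xPolys σ :=
  ⟨single a c, AddMonoidAlgebra.mapDomain_single⟩

theorem apply_eq_of_mem_xPolys {N : Type*} [AddCommMonoid N] [Module ℝ N]
    {F G : ℝ[(σ → ℕ) × ℕ] →ₗ[ℝ] N} (hFG : ∀ a, F (single (a, 0) 1) = G (single (a, 0) 1))
    {P : ℝ[(σ → ℕ) × ℕ]} (hP : P ∈ xPolys σ) : F P = G P := by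
  obtain ⟨Q, rfl⟩ := hP
  induction Q using AddMonoidAlgebra.induction_linear with
  | zero => simp
  | add u v hu hv => simp only [map_add, hu, hv]
  | single a c =>
    have scale : AddMonoidAlgebra.mapDomainAlgHom ℝ ℝ (AddMonoidHom.inl (σ → ℕ) ℕ) (single a c)
        = c • single (a, 0) (1 : ℝ) := by
      simp
    simp only [AlgHom.toRingHom_eq_coe, RingHom.coe_coe, scale, map_smul, hFG]

theorem single_mul_yVar_pow (a : σ → ℕ) (k : ℕ) (c : ℝ) :
    single (a, 0) c * yVar σ ^ k = single (a, k) c := by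
  simp [AddMonoidAlgebra.single_pow, AddMonoidAlgebra.single_mul_single]

theorem single_zero_pow (a : σ → ℕ) (k : ℕ) :
    (single (a, 0) 1 : ℝ[(σ → ℕ) × ℕ]) ^ k = single (k • a, 0) 1 := by
  rw [AddMonoidAlgebra.single_pow, Prod.smul_mk, smul_zero, one_pow]

theorem eventually_abs_apply_le {ι : Type*} {l : Filter ι} {φ : ι → (σ → ℕ) × ℕ → ℝ} {γ : ℝ}
    (hsq : ∀ h, ∀ᶠ r in l, 0 ≤ riesz (φ r) (h ^ 2))
    (hbox : ∀ h, ∀ᶠ r in l, 0 ≤ riesz (φ r) ((γ • yVar σ - yVar σ ^ 2) * h ^ 2))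
    (d : (σ → ℕ) × ℕ) :
    ∀ᶠ r in l, |φ r d| ≤ (φ r 0 + (γ ^ 2) ^ d.2 * φ r (2 • d.1, 0)) / 2 := by
  filter_upwards [hsq (1 - single d 1), hsq (1 + single d 1),
    eventually_apply_mul_pow_sq_le hsq hbox (single (d.1, 0) 1) d.2] with r hsub hadd hle
  have habs := abs_apply_le_of_sq_nonneg hsub hadd
  rw [single_mul_yVar_pow, single_zero_pow] at hle
  simp only [AddMonoidAlgebra.one_def, riesz_single, one_mul] at habs hle
  linarith

end Monomials

variable {σ R R' : Type*} [Fintype σ] [CommSemiring R] [Algebra ℝ R]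
  [CommSemiring R'] [Algebra ℝ R']

/-- Evaluation of a polynomial in `(x, y)` at a point with coordinates in an `ℝ`-algebra. -/
def jointEval (x : σ → R) (y : R) : ℝ[(σ → ℕ) × ℕ] →ₐ[ℝ] R :=
  AddMonoidAlgebra.lift ℝ R _
    { toFun := fun d => (∏ i, x i ^ d.toAdd.1 i) * y ^ d.toAdd.2
      map_one' := by simp
      map_mul' := fun d e => by
        simp only [toAdd_mul, Prod.fst_add, Prod.snd_add, Pi.add_apply, pow_add,
          Finset.prod_mul_distrib]
        ring }

theorem jointEval_single (x : σ → R) (y : R) (d : (σ → ℕ) × ℕ) (c : ℝ) :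
    jointEval x y (single d c) = c • ((∏ i, x i ^ d.1 i) * y ^ d.2) :=
  AddMonoidAlgebra.lift_single _ _ _

theorem jointEval_yVar (x : σ → R) (y : R) : jointEval x y (yVar σ) = y := by
  simp [jointEval_single]

theorem jointEval_eq_of_mem_xPolys (x : σ → R) (y z : R) {P : ℝ[(σ → ℕ) × ℕ]}
    (hP : P ∈ xPolys σ) : jointEval x y P = jointEval x z P :=
  apply_eq_of_mem_xPolys (F := (jointEval x y).toLinearMap) (G := (jointEval x z).toLinearMap)
    (fun a => by simp [jointEval_single]) hP

theorem map_jointEval (F : R →ₐ[ℝ] R') (x : σ → R) (y : R) (P : ℝ[(σ → ℕ) × ℕ]) :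
    F (jointEval x y P) = jointEval (fun i => F (x i)) (F y) P := by
  induction P using AddMonoidAlgebra.induction_linear with
  | zero => simp only [map_zero]
  | add u v hu hv => simp only [map_add, hu, hv]
  | single d c => simp only [jointEval_single, map_smul, map_mul, map_prod, map_pow]

/-- The polynomial functions of `x`, as continuous functions on `ℝ^σ`. -/
def xPolyFunctions (σ : Type*) [Fintype σ] : Subalgebra ℝ C(σ → ℝ, ℝ) :=
  (xPolys σ).map (jointEval ContinuousMap.eval 0)

theorem xPolyFunctions_separatesPoints : (xPolyFunctions σ).SeparatesPoints := by
  classical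
  intro x x' hne
  obtain ⟨i, hi⟩ := Function.ne_iff.1 hne
  refine ⟨_, ⟨_, ⟨_, single_mem_xPolys (Pi.single i 1) 1, rfl⟩, rfl⟩, ?_⟩
  simpa [jointEval_single, Pi.single_apply] using hi

theorem jointEval_continuousMap_apply {P : ℝ[(σ → ℕ) × ℕ]} (hP : P ∈ xPolys σ) (x : σ → ℝ)
    (y : ℝ) : jointEval ContinuousMap.eval (0 : C(σ → ℝ, ℝ)) P x = jointEval x y P :=
  (map_jointEval (ContinuousMap.evalAlgHom ℝ ℝ x) _ _ P).trans
    (jointEval_eq_of_mem_xPolys _ _ _ hP)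

end GraphPolynomials

section GraphMoments

open Filter Topology
open scoped AddMonoidAlgebra
open AddMonoidAlgebra (single)

variable {σ : Type*} [Fintype σ]

/-- The moments of the measure `δ_{f(x)}(dy) λ(dx)` carried by the graph of `f`. -/
def graphMoment (lam : Measure (σ → ℝ)) (f : (σ → ℝ) → ℝ) (d : (σ → ℕ) × ℕ) : ℝ :=
  ∫ x, (∏ i, x i ^ d.1 i) * f x ^ d.2 ∂lam

variable {lam : Measure (σ → ℝ)} [IsFiniteMeasure lam] {X : Set (σ → ℝ)} {f : (σ → ℝ) → ℝ} {C : ℝ}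

theorem integrable_jointEval (hX : IsCompact X) (hlam : ∀ᵐ x ∂lam, x ∈ X)
    (hf : AEStronglyMeasurable f lam) (hfC : ∀ᵐ x ∂lam, |f x| ≤ C) (P : ℝ[(σ → ℕ) × ℕ]) :
    Integrable (fun x => jointEval x (f x) P) lam := by
  induction P using AddMonoidAlgebra.induction_linear with
  | zero => simp
  | add u v hu hv =>
    simp only [map_add]
    exact hu.add hv
  | single d c =>
    simp only [jointEval_single]
    have hcont : Continuous fun x : σ → ℝ => ∏ i, x i ^ d.1 i := by fun_prop
    obtain ⟨B, hB⟩ := hX.exists_bound_of_continuousOn hcont.continuousOn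
    refine (Integrable.of_bound (hcont.aestronglyMeasurable.mul (hf.pow d.2)) (B * C ^ d.2)
      ?_).smul c
    filter_upwards [hlam, hfC] with x hx hfx
    rw [Pi.mul_apply, norm_mul, Pi.pow_apply, norm_pow]
    exact mul_le_mul (hB x hx) (pow_le_pow_left₀ (norm_nonneg _) hfx _) (by positivity)
      ((norm_nonneg _).trans (hB x hx))

theorem riesz_graphMoment (hX : IsCompact X) (hlam : ∀ᵐ x ∂lam, x ∈ X)
    (hf : AEStronglyMeasurable f lam) (hfC : ∀ᵐ x ∂lam, |f x| ≤ C) (P : ℝ[(σ → ℕ) × ℕ]) :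
    riesz (graphMoment lam f) P = ∫ x, jointEval x (f x) P ∂lam := by
  induction P using AddMonoidAlgebra.induction_linear with
  | zero => simp
  | add u v hu hv =>
    simp only [map_add, hu, hv]
    exact (integral_add (integrable_jointEval hX hlam hf hfC u)
      (integrable_jointEval hX hlam hf hfC v)).symm
  | single d c =>
    simp only [riesz_single, jointEval_single, smul_eq_mul, integral_const_mul, graphMoment]

theorem riesz_graphMoment_mul_sq_nonneg (hX : IsCompact X) (hlam : ∀ᵐ x ∂lam, x ∈ X)
    (hf : AEStronglyMeasurable f lam) (hfC : ∀ᵐ x ∂lam, |f x| ≤ C) {q : ℝ[(σ → ℕ) × ℕ]}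
    (hq : ∀ᵐ x ∂lam, 0 ≤ jointEval x (f x) q) (h : ℝ[(σ → ℕ) × ℕ]) :
    0 ≤ riesz (graphMoment lam f) (q * h ^ 2) := by
  rw [riesz_graphMoment hX hlam hf hfC]
  refine integral_nonneg_of_ae ?_
  filter_upwards [hq] with x hx
  rw [Pi.zero_apply, map_mul, map_pow]
  positivity

theorem isMomentLimit_graphMoment (hX : IsCompact X) (hlam : ∀ᵐ x ∂lam, x ∈ X)
    (hf : AEStronglyMeasurable f lam) (hC : 0 ≤ C) (hfC : ∀ᵐ x ∂lam, |f x| ≤ C) :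
    IsMomentLimit (riesz (graphMoment lam f)) (xPolys σ) (yVar σ) := by
  have hf_int : Integrable f lam := .of_bound hf C hfC
  obtain ⟨u, hu, hu_le, hu_lim⟩ := exists_seq_mem_subalgebra_tendsto_ae
    xPolyFunctions_separatesPoints hX hlam hf_int hC hfC
  choose p hp hpu using hu
  have p_le : ∀ k, ∀ x ∈ X, |jointEval x (f x) (p k)| ≤ C + 1 := fun k x hx => by
    rw [← jointEval_continuousMap_apply (hp k)]
    exact hpu k ▸ hu_le k x hx
  have p_lim : ∀ᵐ x ∂lam, Tendsto (fun k => jointEval x (f x) (p k)) atTop (𝓝 (f x)) := by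
    filter_upwards [hu_lim] with x hx
    simp only [← jointEval_continuousMap_apply (hp _)]
    exact hx.congr fun k => by rw [← hpu]; rfl
  refine ⟨p, hp, fun w j => ?_⟩
  simp only [riesz_graphMoment hX hlam hf hfC]
  refine tendsto_integral_of_dominated_convergence
    (fun x => |jointEval x (f x) w| * (C + 1) ^ j)
    (fun k => (integrable_jointEval hX hlam hf hfC _).1)
    ((integrable_jointEval hX hlam hf hfC w).abs.mul_const _) (fun k => ?_) ?_
  · filter_upwards [hlam] with x hx
    rw [map_mul, map_pow, norm_mul, norm_pow, Real.norm_eq_abs, Real.norm_eq_abs]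
    gcongr
    exact p_le k x hx
  · filter_upwards [p_lim] with x hx
    simpa only [map_mul, map_pow, jointEval_yVar] using (hx.pow j).const_mul _

theorem eq_graphMoment_of_sum_le (hX : IsCompact X) (hlam : ∀ᵐ x ∂lam, x ∈ X)
    (hf : AEStronglyMeasurable f lam) (hC : 0 ≤ C) (hfC : ∀ᵐ x ∂lam, |f x| ≤ C)
    {ψ : (σ → ℕ) × ℕ → ℝ} (hψ : ∀ h, 0 ≤ riesz ψ (h ^ 2))
    (hψD : ∀ d : (σ → ℕ) × ℕ, d.2 ≤ 1 → ψ d = graphMoment lam f d)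
    {T : Finset ((σ → ℕ) × ℕ)} (hT : (0, 1) ∈ T)
    (hsum : ∑ d ∈ T, ψ (2 • d) ≤ ∑ d ∈ T, graphMoment lam f (2 • d)) :
    ψ = graphMoment lam f := by
  have hlim := isMomentLimit_graphMoment hX hlam hf hC hfC
  have agree : ∀ w ∈ xPolys σ, riesz ψ w = riesz (graphMoment lam f) w := fun w hw =>
    apply_eq_of_mem_xPolys (fun a => by simp [hψD]) hw
  have agree_yVar : ∀ w ∈ xPolys σ,
      riesz ψ (yVar σ * w) = riesz (graphMoment lam f) (yVar σ * w) := fun w hw =>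
    apply_eq_of_mem_xPolys (F := riesz ψ ∘ₗ LinearMap.mulLeft ℝ (yVar σ))
      (G := riesz (graphMoment lam f) ∘ₗ LinearMap.mulLeft ℝ (yVar σ))
      (fun a => by simp [AddMonoidAlgebra.single_mul_single, hψD]) hw
  have single_two_nsmul (d : (σ → ℕ) × ℕ) :
      (single (2 • d) 1 : ℝ[(σ → ℕ) × ℕ]) = single (d.1, 0) 1 ^ 2 * yVar σ ^ (2 * d.2) := by
    rw [single_zero_pow, single_mul_yVar_pow]
    rfl
  have even_le (d : (σ → ℕ) × ℕ) : graphMoment lam f (2 • d) ≤ ψ (2 • d) := by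
    simpa only [← single_two_nsmul, riesz_single, one_mul] using
      hlim.apply_sq_mul_even_pow_le hψ agree agree_yVar (single_mem_xPolys d.1 1) d.2
  have even_eq := (Finset.sum_eq_sum_iff_of_le fun d _ => even_le d).1
    (le_antisymm (Finset.sum_le_sum fun d _ => even_le d) hsum)
  have agree_sq : riesz ψ (yVar σ ^ 2) = riesz (graphMoment lam f) (yVar σ ^ 2) := by
    rw [AddMonoidAlgebra.single_pow, riesz_single, riesz_single, even_eq _ hT]
  funext d
  simpa only [single_mul_yVar_pow, riesz_single, one_mul] using
    hlim.apply_mul_pow_eq hψ agree agree_yVar agree_sq (single_mem_xPolys d.1 1) d.2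

theorem tendsto_graphMoment_of_sum_le (hX : IsCompact X) (hlam : ∀ᵐ x ∂lam, x ∈ X)
    (hf : AEStronglyMeasurable f lam) (hC : 0 ≤ C) (hfC : ∀ᵐ x ∂lam, |f x| ≤ C)
    {ι : Type*} {l : Filter ι} {φ : ι → (σ → ℕ) × ℕ → ℝ} {γ : ℝ}
    (hsq : ∀ h, ∀ᶠ r in l, 0 ≤ riesz (φ r) (h ^ 2))
    (hbox : ∀ h, ∀ᶠ r in l, 0 ≤ riesz (φ r) ((γ • yVar σ - yVar σ ^ 2) * h ^ 2))
    (hφD : ∀ d : (σ → ℕ) × ℕ, d.2 ≤ 1 → ∀ᶠ r in l, φ r d = graphMoment lam f d)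
    {T : Finset ((σ → ℕ) × ℕ)} (hT : (0, 1) ∈ T)
    (hsum : ∀ᶠ r in l, ∑ d ∈ T, φ r (2 • d) ≤ ∑ d ∈ T, graphMoment lam f (2 • d))
    (d : (σ → ℕ) × ℕ) :
    Tendsto (φ · d) l (𝓝 (graphMoment lam f d)) := by
  refine tendsto_of_forall_ultrafilter_limit_eq (fun d => ?_) fun U ψ hU hψ => ?_
  · refine ⟨_, isCompact_closedBall 0
      ((graphMoment lam f 0 + (γ ^ 2) ^ d.2 * graphMoment lam f (2 • d.1, 0)) / 2), ?_⟩
    filter_upwards [eventually_abs_apply_le hsq hbox d, hφD 0 zero_le_one,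
      hφD (2 • d.1, 0) zero_le_one] with r hle hzero htwo
    rwa [mem_closedBall_zero_iff, Real.norm_eq_abs, ← hzero, ← htwo]
  · refine congrFun (eq_graphMoment_of_sum_le hX hlam hf hC hfC (fun h => ?_) (fun e he => ?_)
      hT ?_) d
    · exact ge_of_tendsto (tendsto_riesz hψ _) (hU (hsq h))
    · exact tendsto_nhds_unique_of_eventuallyEq (hψ e) tendsto_const_nhds (hU (hφD e he))
    · exact le_of_tendsto (tendsto_finsetSum T fun e _ => hψ (2 • e)) (hU hsum)

end GraphMoments

section Relaxation

open Filter Topology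
open scoped AddMonoidAlgebra
open AddMonoidAlgebra (single)

variable {n : ℕ}

theorem mem_idx {r : ℕ} {d : (Fin n → ℕ) × ℕ} : d ∈ idx n r ↔ (∑ i, d.1 i) + d.2 ≤ r := by
  simp only [idx, Finset.mem_filter, Finset.mem_product, Fintype.mem_piFinset, Finset.mem_range,
    Nat.lt_succ_iff, and_iff_right_iff_imp]
  intro hd
  have coord_le (i : Fin n) : d.1 i ≤ ∑ i, d.1 i :=
    Finset.single_le_sum (fun _ _ => Nat.zero_le _) (Finset.mem_univ i)
  exact ⟨fun i => (coord_le i).trans (by omega), by omega⟩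

theorem eventually_mem_idx_sub (t : ℕ) (d : (Fin n → ℕ) × ℕ) :
    ∀ᶠ r in atTop, d ∈ idx n (r - t) := by
  filter_upwards [eventually_ge_atTop ((∑ i, d.1 i) + d.2 + t)] with r hr
  exact mem_idx.2 (Nat.le_sub_of_add_le hr)

/-- The polynomial in `x` of degree `≤ r` with coefficients `c`, whose values are given by
`polyEval`. -/
def xPolyOfCoeffs (n r : ℕ) (c : (Fin n → ℕ) → ℝ) : ℝ[(Fin n → ℕ) × ℕ] :=
  ∑ e ∈ xIdx n r, single (e, 0) (c e)

theorem jointEval_xPolyOfCoeffs (r : ℕ) (c : (Fin n → ℕ) → ℝ) (x : Fin n → ℝ) (y : ℝ) :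
    jointEval x y (xPolyOfCoeffs n r c) = polyEval n r c x := by
  simp [xPolyOfCoeffs, polyEval, jointEval_single]

theorem momMat_eq_localizingMatrix (r : ℕ) (φ : (Fin n → ℕ) × ℕ → ℝ) :
    momMat n r φ = localizingMatrix (idx n r) φ 1 := by
  ext a b
  simp only [localizingMatrix, one_mul, riesz_single]
  rfl

theorem locMatX_eq_localizingMatrix (c : (Fin n → ℕ) → ℝ) (t r : ℕ) (φ : (Fin n → ℕ) × ℕ → ℝ) :
    locMatX n c t r φ = localizingMatrix (idx n (r - t)) φ (xPolyOfCoeffs n (2 * t) c) := by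
  ext a b
  simp only [localizingMatrix, xPolyOfCoeffs, Finset.sum_mul, map_sum,
    AddMonoidAlgebra.single_mul_single, mul_one, riesz_single, ← add_assoc, Prod.add_def, zero_add]
  rfl

theorem locMatY_eq_localizingMatrix (γ : ℝ) (r : ℕ) (φ : (Fin n → ℕ) × ℕ → ℝ) :
    locMatY n γ r φ
      = localizingMatrix (idx n (r - 1)) φ (γ • yVar (Fin n) - yVar (Fin n) ^ 2) := by
  ext a b
  simp only [localizingMatrix, sub_mul, smul_mul_assoc, AddMonoidAlgebra.single_pow,
    AddMonoidAlgebra.single_mul_single, map_sub, map_smul, riesz_single, smul_eq_mul, one_pow,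
    mul_one, one_mul, Prod.add_def, Prod.smul_mk, smul_zero, zero_add,
    add_comm 1, add_comm 2]
  rfl

theorem ae_abs_le_of_ae_mem_Icc {E : Type*} [MeasurableSpace E] {μ : Measure E} {f : E → ℝ} {γ : ℝ}
    (hf : ∀ᵐ x ∂μ, f x ∈ Icc 0 γ) : ∀ᵐ x ∂μ, |f x| ≤ |γ| :=
  hf.mono fun _ hx => abs_le_abs_of_nonneg hx.1 hx.2

variable {m : ℕ} {γ : ℝ} {g : Fin m → (Fin n → ℕ) → ℝ} {t : Fin m → ℕ} {X : Set (Fin n → ℝ)}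
  {lam : Measure (Fin n → ℝ)} [IsFiniteMeasure lam] {f : (Fin n → ℝ) → ℝ}

theorem feasible_graphMoment (hX : IsCompact X) (hlam : ∀ᵐ x ∂lam, x ∈ X)
    (hXg : ∀ x ∈ X, ∀ j, 0 ≤ polyEval n (2 * t j) (g j) x)
    (hf : AEStronglyMeasurable f lam) (hfY : ∀ᵐ x ∂lam, f x ∈ Icc 0 γ) (r : ℕ) :
    Feasible n m γ g t (graphMoment lam f) r (graphMoment lam f) := by
  have nonneg := fun {q : ℝ[(Fin n → ℕ) × ℕ]} =>
    riesz_graphMoment_mul_sq_nonneg (q := q) hX hlam hf (ae_abs_le_of_ae_mem_Icc hfY)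
  refine ⟨?_, fun j => ?_, ?_, fun _ _ _ => rfl⟩
  · rw [momMat_eq_localizingMatrix]
    exact posSemidef_localizingMatrix _ (nonneg (by simp))
  · rw [locMatX_eq_localizingMatrix]
    refine posSemidef_localizingMatrix _ (nonneg (hlam.mono fun x hx => ?_))
    rw [jointEval_xPolyOfCoeffs]
    exact hXg x hx j
  · rw [locMatY_eq_localizingMatrix]
    refine posSemidef_localizingMatrix _ (nonneg (hfY.mono fun x hx => ?_))
    rw [map_sub, map_smul, map_pow, jointEval_yVar, smul_eq_mul, sq, ← sub_mul]
    exact mul_nonneg (sub_nonneg.2 hx.2) hx.1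

theorem tendsto_of_feasible_of_sum_le (hX : IsCompact X) (hlam : ∀ᵐ x ∂lam, x ∈ X)
    (hf : AEStronglyMeasurable f lam) (hfY : ∀ᵐ x ∂lam, f x ∈ Icc 0 γ) {s : ℕ}
    {φseq : ℕ → (Fin n → ℕ) × ℕ → ℝ}
    (hfeas : ∀ᶠ r in atTop, Feasible n m γ g t (graphMoment lam f) r (φseq r))
    (hsum : ∀ᶠ r in atTop,
      ∑ d ∈ idx n s, φseq r (2 • d) ≤ ∑ d ∈ idx n s, graphMoment lam f (2 • d))
    {d : (Fin n → ℕ) × ℕ} (hd : 1 ≤ s ∨ d.2 ≤ 1) :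
    Tendsto (φseq · d) atTop (𝓝 (graphMoment lam f d)) := by
  have agree (e : (Fin n → ℕ) × ℕ) (he : e.2 ≤ 1) :
      ∀ᶠ r in atTop, φseq r e = graphMoment lam f e := by
    filter_upwards [hfeas, eventually_ge_atTop ((∑ i, e.1 i) + e.2)] with r hr hle
    exact hr.2.2.2 e he (by omega)
  obtain hs | hd := hd
  · have sq_nonneg (h : ℝ[(Fin n → ℕ) × ℕ]) : ∀ᶠ r in atTop, 0 ≤ riesz (φseq r) (h ^ 2) := by
      rw [← one_mul (h ^ 2)]
      refine eventually_riesz_mul_sq_nonneg (I := idx n) (eventually_mem_idx_sub 0) ?_ h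
      filter_upwards [hfeas] with r hr
      rw [← momMat_eq_localizingMatrix]
      exact hr.1
    have box_nonneg (h : ℝ[(Fin n → ℕ) × ℕ]) : ∀ᶠ r in atTop,
        0 ≤ riesz (φseq r) ((γ • yVar (Fin n) - yVar (Fin n) ^ 2) * h ^ 2) := by
      refine eventually_riesz_mul_sq_nonneg (eventually_mem_idx_sub 1) ?_ h
      filter_upwards [hfeas] with r hr
      rw [← locMatY_eq_localizingMatrix]
      exact hr.2.2.1
    exact tendsto_graphMoment_of_sum_le hX hlam hf (abs_nonneg γ) (ae_abs_le_of_ae_mem_Icc hfY)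
      sq_nonneg box_nonneg agree (mem_idx.2 (by simpa using hs)) hsum d
  · exact tendsto_const_nhds.congr' ((agree d hd).mono fun _ => Eq.symm)

theorem sdp_convergence_finitely_many_moments_general (hX : IsCompact X)
    (hXg : ∀ x ∈ X, ∀ j, 0 ≤ polyEval n (2 * t j) (g j) x) (hlam : ∀ᵐ x ∂lam, x ∈ X)
    (hf : AEStronglyMeasurable f lam) (hfY : ∀ᵐ x ∂lam, f x ∈ Icc 0 γ) (s : ℕ)
    (φseq : ℕ → (Fin n → ℕ) × ℕ → ℝ)
    (hopt : ∀ᶠ r in atTop, Feasible n m γ g t (graphMoment lam f) r (φseq r) ∧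
      ∀ φ, Feasible n m γ g t (graphMoment lam f) r φ →
        ∑ d ∈ idx n s, φseq r (2 • d) ≤ ∑ d ∈ idx n s, φ (2 • d)) :
    Tendsto (fun r => ∑ d ∈ idx n s, φseq r (2 • d)) atTop
      (𝓝 (∑ d ∈ idx n s, graphMoment lam f (2 • d))) ∧
    ∀ d : (Fin n → ℕ) × ℕ, (1 ≤ s ∨ d.2 ≤ 1) →
      Tendsto (fun r => φseq r d) atTop (𝓝 (graphMoment lam f d)) := by
  have moments_lim (d : (Fin n → ℕ) × ℕ) (hd : 1 ≤ s ∨ d.2 ≤ 1) :=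
    tendsto_of_feasible_of_sum_le hX hlam hf hfY (hopt.mono fun _ h => h.1)
      (hopt.mono fun r h => h.2 _ (feasible_graphMoment hX hlam hXg hf hfY r)) hd
  refine ⟨tendsto_finsetSum _ fun d hd => moments_lim _ ?_, moments_lim⟩
  rw [mem_idx] at hd
  rw [Prod.smul_snd, smul_eq_mul]
  omega

end Relaxation

open Filter Topology in
/-- If `φ^r` is an optimal solution of the order-`r` relaxation with
objective `𝒯_s(φ) = Σ_{|d| ≤ s} φ_{2d}` for each admissible `r`, then the optimal values
`𝒯_s(φ^r)` converge to `𝒯_s(μ) = Σ_{|d| ≤ s} μ_{2d}` and `φ^r_d → μ_d` for every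
`d ∈ ℕ^{n+1}_{2s}`. -/
theorem sdp_convergence_finitely_many_moments
    (n m : ℕ) (hn : 1 ≤ n) (hm : 1 ≤ m)
    (γ : ℝ) (hγ : 0 < γ)
    (g : Fin m → (Fin n → ℕ) → ℝ) (t : Fin m → ℕ)
    (hgdeg : ∀ j e, 2 * t j < ∑ i, e i → g j e = 0)
    (hg1t : t ⟨0, hm⟩ = 1)
    (hg1 : ∀ x : Fin n → ℝ,
      polyEval n (2 * t ⟨0, hm⟩) (g ⟨0, hm⟩) x = (n : ℝ) - ∑ i, x i ^ 2)
    (X : Set (Fin n → ℝ))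
    (hXdef : X = {x | ∀ j, 0 ≤ polyEval n (2 * t j) (g j) x})
    (hXsub : X ⊆ Icc 0 1) (hXc : IsCompact X)
    (lam : Measure (Fin n → ℝ)) [IsProbabilityMeasure lam] (hlam : lam Xᶜ = 0)
    (f : (Fin n → ℝ) → ℝ) (hf : Measurable f) (hfY : ∀ x ∈ X, f x ∈ Icc 0 γ)
    (μmom : ((Fin n → ℕ) × ℕ) → ℝ)
    (hμmom : ∀ d : (Fin n → ℕ) × ℕ,
      μmom d = ∫ x, (∏ i, x i ^ d.1 i) * f x ^ d.2 ∂lam)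
    (s : ℕ)
    (φseq : ℕ → ((Fin n → ℕ) × ℕ) → ℝ)
    (hopt : ∀ r : ℕ, s ≤ r → 1 ≤ r → (∀ j, t j ≤ r) →
      Feasible n m γ g t μmom r (φseq r) ∧
      ∀ φ : ((Fin n → ℕ) × ℕ) → ℝ, Feasible n m γ g t μmom r φ →
        ∑ d ∈ idx n s, φseq r (fun i => 2 * d.1 i, 2 * d.2)
          ≤ ∑ d ∈ idx n s, φ (fun i => 2 * d.1 i, 2 * d.2)) :
    Tendsto (fun r => ∑ d ∈ idx n s, φseq r (fun i => 2 * d.1 i, 2 * d.2)) atTop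
      (𝓝 (∑ d ∈ idx n s, μmom (fun i => 2 * d.1 i, 2 * d.2))) ∧
    ∀ d : (Fin n → ℕ) × ℕ, (∑ i, d.1 i) + d.2 ≤ 2 * s →
      Tendsto (fun r => φseq r d) atTop (𝓝 (μmom d)) := by
  obtain rfl : μmom = graphMoment lam f := funext hμmom
  have hlamX : ∀ᵐ x ∂lam, x ∈ X := hlam
  obtain ⟨objective_lim, moments_lim⟩ := sdp_convergence_finitely_many_moments_general hXc
    (fun x hx => by rwa [hXdef] at hx) hlamX hf.aestronglyMeasurable (hlamX.mono hfY) s φseq <| by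
      filter_upwards [eventually_ge_atTop s, eventually_ge_atTop 1,
        eventually_all.2 fun j => eventually_ge_atTop (t j)] using hopt
  exact ⟨objective_lim, fun d hd => moments_lim d (by omega)⟩
end
end

section
/- Let f : [−1,1] → [−1,1] be defined by f(x) = −1 + √((1+x)(3−x)), and let λ be the measure on [−1,1] with density x ↦ (1−x)/2 with respect to Lebesgue measure. Then the pushforward measure f_*λ is the measure on [−1,1] with density y ↦ (1+y)/2 with respect to Lebesgue measure. -/
open MeasureTheory Set

noncomputable section

/-!
Since `(1 + x) * (3 - x) = 4 - (1 - x) ^ 2`, in the coordinates `u = 1 - x` and `v = 1 + y` the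
graph of the map is the quarter circle `u ^ 2 + v ^ 2 = 4`. Along it `u du + v dv = 0`, so the
involution `u ↦ √(4 - u ^ 2)` of `[0, 2]` preserves the measure `u du`.
-/

section MeasurePreserving

variable {α β : Type*} [MeasurableSpace α] [MeasurableSpace β] {μ : Measure α} {ν : Measure β}
  {f : α → β} {ρ : α → ENNReal} {σ : β → ENNReal}

theorem measurePreserving_withDensity (hf : MeasurePreserving f μ ν) (hσ : AEMeasurable σ ν)
    (hρ : ρ =ᵐ[μ] σ ∘ f) :
    MeasurePreserving f (μ.withDensity ρ) (ν.withDensity σ) where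
  measurable := hf.measurable
  map_eq := by
    rw [withDensity_congr_ae hρ]
    ext B hB
    have hfB : (μ.restrict (f ⁻¹' B)).map f = ν.restrict B := (hf.restrict_preimage hB).map_eq
    rw [Measure.map_apply hf.measurable hB, withDensity_apply _ (hf.measurable hB),
      withDensity_apply _ hB, ← hfB,
      lintegral_map' (hfB ▸ hσ.restrict) hf.measurable.aemeasurable]
    rfl

theorem measurePreserving_restrict_withDensity {s : Set α} {t : Set β}
    (hf : MeasurePreserving f μ ν) (ht : MeasurableSet t) (hσ : AEMeasurable σ (ν.restrict t))
    (hst : f ⁻¹' t = s) (hρ : ∀ x ∈ s, ρ x = σ (f x)) :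
    MeasurePreserving f ((μ.restrict s).withDensity ρ) ((ν.restrict t).withDensity σ) := by
  subst hst
  exact measurePreserving_withDensity (hf.restrict_preimage ht) hσ
    (ae_restrict_of_forall_mem (hf.measurable ht) hρ)

end MeasurePreserving

section ChangeOfVariables

theorem map_withDensity_of_hasFDerivWithinAt {E : Type*} [NormedAddCommGroup E] [NormedSpace ℝ E]
    [FiniteDimensional ℝ E] [MeasurableSpace E] [BorelSpace E] (μ : Measure E)
    [μ.IsAddHaarMeasure] {s t : Set E} {f : E → E} {f' : E → E →L[ℝ] E} {ρ σ : E → ENNReal}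
    (hs : MeasurableSet s) (hf' : ∀ x ∈ s, HasFDerivWithinAt f (f' x) s x) (hf : BijOn f s t)
    (hρ : ∀ x ∈ s, ρ x = ENNReal.ofReal |(f' x).det| * σ (f x)) :
    ((μ.restrict s).withDensity ρ).map f = (μ.restrict t).withDensity σ := by
  have hfm : AEMeasurable f (μ.restrict s) :=
    ContinuousOn.aemeasurable (fun x hx => (hf' x hx).continuousWithinAt) hs
  have hfm_density : AEMeasurable f ((μ.restrict s).withDensity ρ) :=
    hfm.mono_ac (withDensity_absolutelyContinuous _ _)
  ext B hB
  have hpre : NullMeasurableSet (f ⁻¹' B) (μ.restrict s) := hfm.nullMeasurableSet_preimage hB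
  have hindicator : EqOn ((f ⁻¹' B).indicator ρ)
      (fun x => ENNReal.ofReal |(f' x).det| * B.indicator σ (f x)) s := by
    intro x hx
    by_cases hxB : f x ∈ B <;> simp [hxB, hρ x hx]
  calc ((μ.restrict s).withDensity ρ).map f B
      = ∫⁻ x in s, (f ⁻¹' B).indicator ρ x ∂μ := by
        rw [Measure.map_apply_of_aemeasurable hfm_density hB, withDensity_apply₀ _ hpre,
          lintegral_indicator₀ hpre]
    _ = ∫⁻ x in s, ENNReal.ofReal |(f' x).det| * B.indicator σ (f x) ∂μ :=
        setLIntegral_congr_fun hs hindicator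
    _ = ∫⁻ y in t, B.indicator σ y ∂μ := by
        rw [← hf.image_eq, lintegral_image_eq_lintegral_abs_det_fderiv_mul μ hs hf' hf.injOn]
    _ = (μ.restrict t).withDensity σ B := by
        rw [lintegral_indicator hB, withDensity_apply _ hB]

theorem measurePreserving_withDensity_of_hasDerivWithinAt {s t : Set ℝ} {f f' : ℝ → ℝ}
    {ρ σ : ℝ → ENNReal} (hs : MeasurableSet s) (hfm : Measurable f)
    (hf' : ∀ x ∈ s, HasDerivWithinAt f (f' x) s x) (hf : BijOn f s t)
    (hρ : ∀ x ∈ s, ρ x = ENNReal.ofReal |f' x| * σ (f x)) :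
    MeasurePreserving f ((volume.restrict s).withDensity ρ)
      ((volume.restrict t).withDensity σ) where
  measurable := hfm
  map_eq := map_withDensity_of_hasFDerivWithinAt volume hs
    (fun x hx => (hf' x hx).hasFDerivWithinAt) hf
    (by simpa only [ContinuousLinearMap.det_toSpanSingleton] using hρ)

end ChangeOfVariables

/-- The upper half of the circle of radius `r` centred at the origin, as the graph of a function;
it is `0` where `r ^ 2 < u ^ 2`. -/
def circleArc (r u : ℝ) : ℝ := √(r ^ 2 - u ^ 2)

section CircleArc

variable (r : ℝ)

theorem measurable_circleArc : Measurable (circleArc r) := by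
  unfold circleArc
  fun_prop

theorem mapsTo_circleArc : MapsTo (circleArc r) (Ioo 0 r) (Ioo 0 r) := by
  rintro u ⟨hu, hur⟩
  have hr : 0 < r := hu.trans hur
  exact ⟨Real.sqrt_pos.2 (by nlinarith), (Real.sqrt_lt' hr).2 (by nlinarith)⟩

theorem leftInvOn_circleArc : LeftInvOn (circleArc r) (circleArc r) (Ioo 0 r) := by
  rintro u ⟨hu, hur⟩
  have hsq : circleArc r u ^ 2 = r ^ 2 - u ^ 2 := Real.sq_sqrt (by nlinarith)
  rw [circleArc, hsq, sub_sub_cancel, Real.sqrt_sq hu.le]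

theorem bijOn_circleArc : BijOn (circleArc r) (Ioo 0 r) (Ioo 0 r) :=
  InvOn.bijOn ⟨leftInvOn_circleArc r, leftInvOn_circleArc r⟩
    (mapsTo_circleArc r) (mapsTo_circleArc r)

variable {r} in
theorem hasDerivAt_circleArc {u : ℝ} (hu : r ^ 2 - u ^ 2 ≠ 0) :
    HasDerivAt (circleArc r) (-u / circleArc r u) u := by
  have hd : HasDerivAt (fun u : ℝ => r ^ 2 - u ^ 2) (-(2 * u)) u := by
    simpa using (hasDerivAt_pow 2 u).const_sub (r ^ 2)
  refine (hd.sqrt hu).congr_deriv ?_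
  rw [← mul_neg, mul_div_mul_left _ _ two_ne_zero, circleArc]

theorem measurePreserving_circleArc (c : ℝ) :
    MeasurePreserving (circleArc r)
      ((volume.restrict (Icc 0 r)).withDensity fun u => ENNReal.ofReal (c * u))
      ((volume.restrict (Icc 0 r)).withDensity fun v => ENNReal.ofReal (c * v)) := by
  rw [← restrict_Ioo_eq_restrict_Icc]
  refine measurePreserving_withDensity_of_hasDerivWithinAt measurableSet_Ioo
    (measurable_circleArc r) (f' := fun u => -u / circleArc r u) ?_ (bijOn_circleArc r) ?_
  · rintro u ⟨hu, hur⟩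
    exact (hasDerivAt_circleArc (by nlinarith)).hasDerivWithinAt
  · intro u hu
    have hv : 0 < circleArc r u := (mapsTo_circleArc r hu).1
    rw [← ENNReal.ofReal_mul (abs_nonneg _), abs_div, abs_neg, abs_of_pos hu.1, abs_of_pos hv]
    field_simp

end CircleArc

/-- The map `f(x) = −1 + √((1+x)(3−x))` pushes the measure with density
`(1−x)/2` on `[−1,1]` forward to the measure with density `(1+y)/2` on `[−1,1]`. -/
theorem pushforward_optimal_transport_map :
    ((volume.restrict (Icc (-1 : ℝ) 1)).withDensity
        (fun x => ENNReal.ofReal ((1 - x) / 2))).map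
        (fun x => -1 + Real.sqrt ((1 + x) * (3 - x)))
      = (volume.restrict (Icc (-1 : ℝ) 1)).withDensity
          (fun y => ENNReal.ofReal ((1 + y) / 2)) := by
  let ν := (volume.restrict (Icc (0 : ℝ) 2)).withDensity fun u => ENNReal.ofReal (2⁻¹ * u)
  have reflection : MeasurePreserving (1 - ·) ((volume.restrict (Icc (-1 : ℝ) 1)).withDensity
      fun x => ENNReal.ofReal ((1 - x) / 2)) ν :=
    measurePreserving_restrict_withDensity (Measure.measurePreserving_sub_left volume 1)
      measurableSet_Icc (by fun_prop) (by norm_num) (fun x _ => by ring_nf)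
  have translation : MeasurePreserving (-1 + ·) ν ((volume.restrict (Icc (-1 : ℝ) 1)).withDensity
      fun y => ENNReal.ofReal ((1 + y) / 2)) :=
    measurePreserving_restrict_withDensity (measurePreserving_add_left volume (-1))
      measurableSet_Icc (by fun_prop) (by norm_num) (fun x _ => by ring_nf)
  have factorization : (fun x : ℝ => -1 + √((1 + x) * (3 - x))) =
      (-1 + ·) ∘ circleArc 2 ∘ (1 - ·) := by
    funext x
    simp only [Function.comp_apply, circleArc]
    ring_nf
  rw [factorization]
  exact (translation.comp ((measurePreserving_circleArc 2 2⁻¹).comp reflection)).map_eq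
end
end

section
/- Let f : [0,1] → [0,1] be defined by f(x) = 2/3 + 4x/3 for x ∈ [0,1/4], f(x) = 2 − 4x for x ∈ (1/4,1/3], and f(x) = 1 − x for x ∈ (1/3,1]. Then the pushforward of Lebesgue measure on [0,1] under f is Lebesgue measure on [0,1]. -/
open MeasureTheory Set

noncomputable section

/-- The optimal transport map of the non-convex transport example: `f(x) = 2/3 + 4x/3`
on `[0,1/4]`, `f(x) = 2 − 4x` on `(1/4,1/3]`, and `f(x) = 1 − x` on `(1/3,1]`. -/
def transportMap (x : ℝ) : ℝ :=
  if x ≤ 1 / 4 then 2 / 3 + 4 * x / 3 else if x ≤ 1 / 3 then 2 - 4 * x else 1 - x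

/-! `transportMap` is affine on `[0, 1/4]`, `[1/4, 1/3]` and `[1/3, 1]`, with slopes `4/3`, `-4` and
`-1`. The first two pieces both cover `[2/3, 1]`, with densities `3/4` and `1/4` adding up to `1`,
and the last one covers `[0, 2/3]` with density `1`. -/

theorem restrict_Icc_add_restrict_Icc {α : Type*} [LinearOrder α] [TopologicalSpace α]
    [OrderClosedTopology α] [MeasurableSpace α] [OpensMeasurableSpace α] (μ : Measure α)
    [NullSingletonClass μ] {a b c : α} (hab : a ≤ b) (hbc : b ≤ c) :
    μ.restrict (Icc a b) + μ.restrict (Icc b c) = μ.restrict (Icc a c) := by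
  rw [← restrict_Ioc_eq_restrict_Icc (a := b), ← Icc_union_Ioc_eq_Icc hab hbc]
  exact (Measure.restrict_union
    (disjoint_left.2 fun _ hx hx' => hx'.1.not_ge hx.2) measurableSet_Ioc).symm

theorem image_mul_add_uIcc {K : Type*} [Field K] [LinearOrder K] [IsStrictOrderedRing K]
    (a b u v : K) :
    (fun x => a * x + b) '' uIcc u v = uIcc (a * u + b) (a * v + b) := by
  rw [← image_add_const_uIcc, ← image_const_mul_uIcc, image_image]

section Affine

variable {a : ℝ}

theorem map_mul_add_volume (ha : a ≠ 0) (b : ℝ) :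
    (volume : Measure ℝ).map (fun x => a * x + b) = ENNReal.ofReal |a⁻¹| • volume := by
  change volume.map ((· + b) ∘ (a * ·)) = _
  rw [← Measure.map_map (measurable_add_const b) (measurable_const_mul a),
    Real.map_volume_mul_left ha, Measure.map_smul, map_add_right_eq_self]

theorem map_mul_add_volume_restrict (ha : a ≠ 0) (b : ℝ) (s : Set ℝ) :
    (volume.restrict s).map (fun x => a * x + b)
      = ENNReal.ofReal |a⁻¹| • volume.restrict ((fun x => a * x + b) '' s) := by
  have hφ : MeasurableEmbedding fun x : ℝ => a * x + b :=
    (affineHomeomorph a b ha).measurableEmbedding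
  rw [← Measure.restrict_smul, ← map_mul_add_volume ha b, hφ.restrict_map,
    preimage_image_eq _ hφ.injective]

theorem map_volume_restrict_uIcc_of_eqOn_mul_add {f : ℝ → ℝ} (ha : a ≠ 0) {b u v : ℝ}
    (hf : EqOn f (fun x => a * x + b) (uIcc u v)) :
    (volume.restrict (uIcc u v)).map f
      = ENNReal.ofReal |a⁻¹| • volume.restrict (uIcc (f u) (f v)) := by
  rw [Measure.map_congr (hf.aeEq_restrict measurableSet_uIcc), map_mul_add_volume_restrict ha,
    image_mul_add_uIcc, hf left_mem_uIcc, hf right_mem_uIcc]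

end Affine

theorem measurable_transportMap : Measurable transportMap :=
  .ite measurableSet_Iic (by fun_prop) (.ite measurableSet_Iic (by fun_prop) (by fun_prop))

theorem transportMap_eqOn_Iic : EqOn transportMap (fun x => 4 / 3 * x + 2 / 3) (Iic (1 / 4)) := by
  intro x (hx : x ≤ 1 / 4)
  simp only [transportMap, if_pos hx]
  ring

theorem transportMap_eqOn_Icc : EqOn transportMap (fun x => -4 * x + 2) (Icc (1 / 4) (1 / 3)) := by
  rintro x ⟨hx, hx'⟩
  simp only [transportMap]
  split_ifs <;> linarith

theorem transportMap_eqOn_Ici : EqOn transportMap (fun x => -1 * x + 1) (Ici (1 / 3)) := by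
  intro x (hx : 1 / 3 ≤ x)
  simp only [transportMap]
  split_ifs <;> linarith

theorem transportMap_zero : transportMap 0 = 2 / 3 := by norm_num [transportMap]

theorem transportMap_quarter : transportMap (1 / 4) = 1 := by norm_num [transportMap]

theorem transportMap_third : transportMap (1 / 3) = 2 / 3 := by norm_num [transportMap]

theorem transportMap_one : transportMap 1 = 0 := by norm_num [transportMap]

theorem map_transportMap_restrict_Icc_zero_quarter :
    (volume.restrict (Icc 0 (1 / 4))).map transportMap
      = ENNReal.ofReal (3 / 4) • volume.restrict (Icc (2 / 3) 1) := by
  have hIcc : uIcc (0 : ℝ) (1 / 4) = Icc 0 (1 / 4) := uIcc_of_le (by norm_num)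
  have haffine := transportMap_eqOn_Iic.mono (hIcc.trans_subset Icc_subset_Iic_self)
  rw [← hIcc, map_volume_restrict_uIcc_of_eqOn_mul_add (by norm_num) haffine,
    transportMap_zero, transportMap_quarter, uIcc_of_le (by norm_num)]
  norm_num

theorem map_transportMap_restrict_Icc_quarter_third :
    (volume.restrict (Icc (1 / 4) (1 / 3))).map transportMap
      = ENNReal.ofReal (1 / 4) • volume.restrict (Icc (2 / 3) 1) := by
  have hIcc : uIcc (1 / 4 : ℝ) (1 / 3) = Icc (1 / 4) (1 / 3) := uIcc_of_le (by norm_num)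
  have haffine := transportMap_eqOn_Icc.mono hIcc.subset
  rw [← hIcc, map_volume_restrict_uIcc_of_eqOn_mul_add (by norm_num) haffine,
    transportMap_quarter, transportMap_third, uIcc_of_ge (by norm_num)]
  norm_num

theorem map_transportMap_restrict_Icc_third_one :
    (volume.restrict (Icc (1 / 3) 1)).map transportMap = volume.restrict (Icc 0 (2 / 3)) := by
  have hIcc : uIcc (1 / 3 : ℝ) 1 = Icc (1 / 3) 1 := uIcc_of_le (by norm_num)
  have haffine := transportMap_eqOn_Ici.mono (hIcc.trans_subset Icc_subset_Ici_self)
  rw [← hIcc, map_volume_restrict_uIcc_of_eqOn_mul_add (by norm_num) haffine,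
    transportMap_third, transportMap_one, uIcc_of_ge (by norm_num)]
  norm_num

/-- The pushforward of Lebesgue measure on `[0,1]` under the piecewise
map `transportMap` is Lebesgue measure on `[0,1]`. -/
theorem pushforward_piecewise_map :
    (volume.restrict (Icc (0 : ℝ) 1)).map transportMap
      = volume.restrict (Icc (0 : ℝ) 1) := by
  have hdom : (volume : Measure ℝ).restrict (Icc 0 1) = volume.restrict (Icc 0 (1 / 4)) +
      volume.restrict (Icc (1 / 4) (1 / 3)) + volume.restrict (Icc (1 / 3) 1) := by
    rw [restrict_Icc_add_restrict_Icc volume (by norm_num) (by norm_num),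
      restrict_Icc_add_restrict_Icc volume (by norm_num) (by norm_num)]
  have hdensity : ENNReal.ofReal (3 / 4) + ENNReal.ofReal (1 / 4) = 1 := by
    rw [← ENNReal.ofReal_add (by norm_num) (by norm_num)]
    norm_num
  calc (volume.restrict (Icc (0 : ℝ) 1)).map transportMap
      = ENNReal.ofReal (3 / 4) • volume.restrict (Icc (2 / 3) 1) +
          ENNReal.ofReal (1 / 4) • volume.restrict (Icc (2 / 3) 1) +
          volume.restrict (Icc 0 (2 / 3)) := by
        rw [hdom, Measure.map_add _ _ measurable_transportMap,
          Measure.map_add _ _ measurable_transportMap, map_transportMap_restrict_Icc_zero_quarter,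
          map_transportMap_restrict_Icc_quarter_third, map_transportMap_restrict_Icc_third_one]
    _ = volume.restrict (Icc 0 (2 / 3)) + volume.restrict (Icc (2 / 3) 1) := by
        rw [← add_smul, hdensity, one_smul, add_comm]
    _ = volume.restrict (Icc (0 : ℝ) 1) :=
        restrict_Icc_add_restrict_Icc volume (by norm_num) (by norm_num)
end
end
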